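/- Let m ≥ 4 and n = 3m + 1. Then for every connected simple graph G on n vertices with domination number 3, ρ(G) ≥ ρ(G_2(m−1, m−4, m−1)), with equality if and only if G is isomorphic to G_2(m−1, m−4, m−1). -/

import Mathlib

open SimpleGraph

/-- Adjacency matrix of a simple graph over ℝ. -/
noncomputable def adjMat {V : Type*} (G : SimpleGraph V) : Matrix V V ℝ :=
  Matrix.of fun i j => @ite ℝ (G.Adj i j) (Classical.propDecidable _) 1 0

/-- Spectral radius: the largest eigenvalue (supremum of the real spectrum)
of the adjacency matrix. -/
noncomputable def specRad {V : Type*} [Fintype V] [DecidableEq V]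
    (G : SimpleGraph V) : ℝ :=
  sSup (spectrum ℝ (adjMat G))

/-- `D` is a dominating set of `G`. -/
def IsDomSet {V : Type*} (G : SimpleGraph V) (D : Finset V) : Prop :=
  ∀ v ∉ D, ∃ u ∈ D, G.Adj u v

/-- The domination number of `G`. -/
noncomputable def domNum {V : Type*} [Fintype V] (G : SimpleGraph V) : ℕ :=
  sInf {k | ∃ D : Finset V, IsDomSet G D ∧ D.card = k}

/-- The tree `G₂(a,b,c)`: the path v1 v4 v5 v2 v6 v7 v3 (vertices `Sum.inl 0, …, Sum.inl 6`
in path order), with `a` pendant edges at v1, `b` pendant edges at v2 and `c` pendant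
edges at v3. -/
def G2graph (a b c : ℕ) : SimpleGraph (Fin 7 ⊕ (Fin a ⊕ Fin b ⊕ Fin c)) :=
  SimpleGraph.fromRel (fun x y =>
    (x = Sum.inl 0 ∧ y = Sum.inl 1) ∨
    (x = Sum.inl 1 ∧ y = Sum.inl 2) ∨
    (x = Sum.inl 2 ∧ y = Sum.inl 3) ∨
    (x = Sum.inl 3 ∧ y = Sum.inl 4) ∨
    (x = Sum.inl 4 ∧ y = Sum.inl 5) ∨
    (x = Sum.inl 5 ∧ y = Sum.inl 6) ∨
    (∃ j : Fin a, x = Sum.inl 0 ∧ y = Sum.inr (Sum.inl j)) ∨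
    (∃ j : Fin b, x = Sum.inl 3 ∧ y = Sum.inr (Sum.inr (Sum.inl j))) ∨
    (∃ j : Fin c, x = Sum.inl 6 ∧ y = Sum.inr (Sum.inr (Sum.inr j))))

/-!
Suppose that `ρ(G) ≤ lam`, where `lam` is the spectral radius of `G₂(m - 1, m - 4, m - 1)`; a
Perron vector of `G` is a positive supersolution `x` of the eigenvalue equation for `lam`. A
dominating set of three vertices partitions `G` into three stars. Eliminating the leaves of the
star at `c` leaves the inequality `∑ x w ≤ (lam² - #leaves) x c`, the sum being over the edges `vw`
that leave this star at `v`, with an extra factor `lam` for those with `v = c`. Writing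
`lam² = m + s` with `0 < s < 1`, the three factors `lam² - #leaves` are `s + a`, `s + b`, `s + c`
with natural numbers `a + b + c = 2`. Since these factors are small, the inequalities leave only
one way to connect the stars: they form a path, linked by edges between distinct leaves, with
`a = c = 0` and `b = 2`. So `G` contains `G₂(m - 1, m - 4, m - 1)` as a spanning subgraph, whose
positive eigenvector for `lam` forces equality.
-/

section Spectral

open Matrix

variable {V W : Type*}

theorem adjMat_eq_adjMatrix (G : SimpleGraph V) [DecidableRel G.Adj] :
    adjMat G = G.adjMatrix ℝ := by
  ext i j
  simp only [adjMat, of_apply, adjMatrix_apply]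
  congr

theorem isHermitian_adjMat (G : SimpleGraph V) : (adjMat G).IsHermitian := by
  classical
  rw [adjMat_eq_adjMatrix, IsHermitian, conjTranspose_eq_transpose_of_trivial]
  exact isSymm_adjMatrix G

variable [Fintype V]

theorem adjMat_mulVec_apply (G : SimpleGraph V) [DecidableRel G.Adj] (x : V → ℝ) (v : V) :
    (adjMat G *ᵥ x) v = ∑ w with G.Adj v w, x w := by
  rw [adjMat_eq_adjMatrix, adjMatrix_mulVec_apply, neighborFinset_eq_filter]

theorem adjMat_mulVec_mono (G : SimpleGraph V) {x y : V → ℝ} (h : x ≤ y) :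
    adjMat G *ᵥ x ≤ adjMat G *ᵥ y := by
  classical
  intro v
  simp only [adjMat_mulVec_apply]
  exact Finset.sum_le_sum fun w _ ↦ h w

theorem abs_adjMat_mulVec_le (G : SimpleGraph V) (x : V → ℝ) (v : V) :
    |(adjMat G *ᵥ x) v| ≤ (adjMat G *ᵥ fun w ↦ |x w|) v := by
  classical
  simp only [adjMat_mulVec_apply]
  exact Finset.abs_sum_le_sum_abs _ _

theorem eq_of_le_of_adjMat_mulVec_eq {H G : SimpleGraph V} (h : H ≤ G) {y : V → ℝ}
    (hy : ∀ v, 0 < y v) (he : adjMat H *ᵥ y = adjMat G *ᵥ y) : H = G := by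
  classical
  refine le_antisymm h fun v w hvw ↦ ?_
  by_contra hn
  refine (Finset.sum_lt_sum_of_subset (f := y) (s := {w | H.Adj v w}) (t := {w | G.Adj v w})
    (Finset.monotone_filter_right _ fun u _ hu ↦ h hu) (i := w) (by simpa using hvw)
    (by simpa using hn) (hy w) fun u _ _ ↦ (hy u).le).ne ?_
  simpa only [adjMat_mulVec_apply] using congrFun he v

variable [DecidableEq V]

theorem specRad_eq_of_iso [Fintype W] [DecidableEq W] {G : SimpleGraph V} {H : SimpleGraph W}
    (e : G ≃g H) : specRad G = specRad H := by
  classical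
  have h : adjMat H = reindexAlgEquiv ℝ ℝ e.toEquiv (adjMat G) := by
    rw [adjMat_eq_adjMatrix, adjMat_eq_adjMatrix]
    exact (e.reindex_adjMatrix ℝ).symm
  rw [specRad, specRad, h, AlgEquiv.spectrum_eq]

variable {G : SimpleGraph V} {lam : ℝ}

theorem le_specRad {μ : ℝ} (hμ : μ ∈ spectrum ℝ (adjMat G)) : μ ≤ specRad G :=
  le_csSup (finite_spectrum _).bddAbove hμ

theorem posSemidef_smul_one_sub_adjMat (h : specRad G ≤ lam) :
    (lam • (1 : Matrix V V ℝ) - adjMat G).PosSemidef := by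
  have hH : (lam • (1 : Matrix V V ℝ) - adjMat G).IsHermitian :=
    ((isHermitian_one (n := V) (α := ℝ)).smul (IsSelfAdjoint.all lam)).sub (isHermitian_adjMat G)
  refine posSemidef_iff_isHermitian_and_spectrum_nonneg.2 ⟨hH, fun μ hμ ↦ ?_⟩
  rw [← Algebra.algebraMap_eq_smul_one, ← spectrum.singleton_sub_eq] at hμ
  obtain ⟨_, rfl, ν, hν, rfl⟩ := Set.mem_sub.1 hμ
  exact sub_nonneg.2 ((le_specRad hν).trans h)

theorem adjMat_mulVec_eq_of_smul_le (h : specRad G ≤ lam) {x : V → ℝ} (hx : 0 ≤ x)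
    (hsub : lam • x ≤ adjMat G *ᵥ x) : adjMat G *ᵥ x = lam • x := by
  have hpsd := posSemidef_smul_one_sub_adjMat h
  have hmul : (lam • (1 : Matrix V V ℝ) - adjMat G) *ᵥ x = lam • x - adjMat G *ᵥ x := by
    rw [sub_mulVec, smul_mulVec, one_mulVec]
  have hzero : star x ⬝ᵥ ((lam • (1 : Matrix V V ℝ) - adjMat G) *ᵥ x) = 0 := by
    refine le_antisymm ?_ (hpsd.dotProduct_mulVec_nonneg x)
    rw [hmul, star_trivial]
    exact Finset.sum_nonpos fun v _ ↦
      mul_nonpos_of_nonneg_of_nonpos (hx v) (sub_nonpos.2 (hsub v))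
  rw [hpsd.dotProduct_mulVec_zero_iff, hmul, sub_eq_zero] at hzero
  exact hzero.symm

omit [DecidableEq V] in
theorem eq_zero_of_adjMat_mulVec_eq (hconn : G.Connected) {x : V → ℝ} (hx : 0 ≤ x)
    (he : adjMat G *ᵥ x = lam • x) {z : V} (hz : x z = 0) : x = 0 := by
  classical
  have hstep : ∀ u w, G.Adj u w → x u = 0 → x w = 0 := by
    intro u w huw hu
    have hsum := congrFun he u
    rw [adjMat_mulVec_apply, Pi.smul_apply, hu, smul_zero,
      Finset.sum_eq_zero_iff_of_nonneg fun w _ ↦ hx w] at hsum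
    exact hsum w (by simpa using huw)
  funext v
  obtain ⟨p⟩ := hconn.preconnected z v
  induction p with
  | nil => exact hz
  | cons hadj _ ih => exact ih (hstep _ _ hadj hz)

/-- The function `x` is a positive supersolution of the eigenvalue equation of `G` for `lam`. -/
structure IsPosSupersolution (G : SimpleGraph V) (lam : ℝ) (x : V → ℝ) : Prop where
  pos : ∀ v, 0 < x v
  mulVec_le : adjMat G *ᵥ x ≤ lam • x

omit [DecidableEq V] in
theorem IsPosSupersolution.sum_le {x : V → ℝ} (hx : IsPosSupersolution G lam x) {v : V}
    {s : Finset V} (hs : ∀ w ∈ s, G.Adj v w) : ∑ w ∈ s, x w ≤ lam * x v := by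
  classical
  refine le_trans ?_ (hx.mulVec_le v)
  rw [adjMat_mulVec_apply]
  exact Finset.sum_le_sum_of_subset_of_nonneg (fun w hw ↦ by simpa using hs w hw)
    fun w _ _ ↦ (hx.pos w).le

omit [DecidableEq V] in
theorem IsPosSupersolution.add_le {x : V → ℝ} (hx : IsPosSupersolution G lam x) {u v w : V}
    (huv : G.Adj u v) (huw : G.Adj u w) (hvw : v ≠ w) : x v + x w ≤ lam * x u := by
  classical
  rw [← Finset.sum_pair hvw]
  exact hx.sum_le (by simp [huv, huw])

/- With `z` an eigenvector for the largest eigenvalue `μ`, the triangle inequality gives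
`μ |z| ≤ A |z|`, hence `A |z| = μ |z|`. -/
theorem exists_isPosSupersolution (hconn : G.Connected) (h : specRad G ≤ lam) :
    ∃ x : V → ℝ, IsPosSupersolution G lam x := by
  have hne : (spectrum ℝ (adjMat G)).Nonempty :=
    hconn.nonempty.elim fun v ↦ ⟨_, (isHermitian_adjMat G).eigenvalues_mem_spectrum_real v⟩
  have hmem : specRad G ∈ spectrum ℝ (adjMat G) := hne.csSup_mem (finite_spectrum _)
  rw [← spectrum_toLin', ← Module.End.hasEigenvalue_iff_mem_spectrum] at hmem
  obtain ⟨z, hz⟩ := hmem.exists_hasEigenvector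
  have hx : 0 ≤ fun v ↦ |z v| := fun v ↦ abs_nonneg _
  have hle : specRad G • (fun v ↦ |z v|) ≤ adjMat G *ᵥ fun v ↦ |z v| := fun v ↦
    calc specRad G * |z v| ≤ |specRad G * z v| := by
          rw [abs_mul]
          exact mul_le_mul_of_nonneg_right (le_abs_self _) (abs_nonneg _)
      _ = |(adjMat G *ᵥ z) v| := by
          rw [← toLin'_apply, hz.apply_eq_smul, Pi.smul_apply, smul_eq_mul]
      _ ≤ (adjMat G *ᵥ fun w ↦ |z w|) v := abs_adjMat_mulVec_le G z v
  have heq := adjMat_mulVec_eq_of_smul_le le_rfl hx hle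
  refine ⟨fun v ↦ |z v|, fun v ↦ (hx v).lt_of_ne fun hv ↦ hz.2 ?_, ?_⟩
  · funext w
    exact abs_eq_zero.1 (congrFun (eq_zero_of_adjMat_mulVec_eq hconn hx heq hv.symm) w)
  · rw [heq]
    exact fun v ↦ mul_le_mul_of_nonneg_right h (hx v)

/- The eigenvalue equation of an eigenvector `z` is compared with the one of `y` at a vertex `v`
where `|z v| / y v` is maximal. -/
theorem IsPosSupersolution.specRad_le {y : V → ℝ} (hy : IsPosSupersolution G lam y)
    (hlam : 0 ≤ lam) : specRad G ≤ lam := by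
  refine Real.sSup_le (fun μ hμ ↦ ?_) hlam
  rw [← spectrum_toLin', ← Module.End.hasEigenvalue_iff_mem_spectrum] at hμ
  obtain ⟨z, hz⟩ := hμ.exists_hasEigenvector
  obtain ⟨u, hu⟩ := Function.ne_iff.1 hz.2
  obtain ⟨v, -, hv⟩ := Finset.exists_max_image Finset.univ (fun v ↦ |z v| / y v) ⟨u, by simp⟩
  set c := |z v| / y v
  have hc : 0 < c := (div_pos (abs_pos.2 hu) (hy.pos u)).trans_le (hv u (by simp))
  have hzc : |z v| = c * y v := (div_mul_cancel₀ _ (hy.pos v).ne').symm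
  have hle : (fun w ↦ |z w|) ≤ c • y := fun w ↦ (div_le_iff₀ (hy.pos w)).1 (hv w (by simp))
  have hbound : μ * (c * y v) ≤ lam * (c * y v) :=
    calc μ * (c * y v) ≤ |μ * z v| := by
          rw [abs_mul, hzc]
          exact mul_le_mul_of_nonneg_right (le_abs_self μ) (mul_pos hc (hy.pos v)).le
      _ = |(adjMat G *ᵥ z) v| := by
          rw [← toLin'_apply, hz.apply_eq_smul, Pi.smul_apply, smul_eq_mul]
      _ ≤ (adjMat G *ᵥ fun w ↦ |z w|) v := abs_adjMat_mulVec_le G z v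
      _ ≤ (adjMat G *ᵥ c • y) v := adjMat_mulVec_mono G hle v
      _ = c * (adjMat G *ᵥ y) v := by rw [mulVec_smul, Pi.smul_apply, smul_eq_mul]
      _ ≤ c * (lam * y v) := mul_le_mul_of_nonneg_left (hy.mulVec_le v) hc.le
      _ = lam * (c * y v) := by ring
  exact le_of_mul_le_mul_right hbound (mul_pos hc (hy.pos v))

theorem eq_of_le_of_specRad_le {H : SimpleGraph V} (hle : H ≤ G) {y : V → ℝ}
    (hy : ∀ v, 0 < y v) (he : adjMat H *ᵥ y = lam • y) (h : specRad G ≤ lam) : H = G := by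
  classical
  refine eq_of_le_of_adjMat_mulVec_eq hle hy (he.trans (adjMat_mulVec_eq_of_smul_le h
    (fun v ↦ (hy v).le) ?_).symm)
  intro v
  rw [← he, adjMat_mulVec_apply, adjMat_mulVec_apply]
  exact Finset.sum_le_sum_of_subset_of_nonneg
    (Finset.monotone_filter_right _ fun u _ hu ↦ hle hu) fun u _ _ ↦ (hy u).le

end Spectral

section StarRetraction

variable {V : Type*}

theorem exists_adj_of_mem_of_notMem {G : SimpleGraph V} (hG : G.Preconnected) {S : Set V} {u w : V}
    (hu : u ∈ S) (hw : w ∉ S) : ∃ v ∈ S, ∃ v' ∉ S, G.Adj v v' := by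
  obtain ⟨q⟩ := hG u w
  obtain ⟨d, -, hd, hd'⟩ := q.exists_boundary_dart S hu hw
  exact ⟨d.fst, hd, d.snd, hd', d.adj⟩

/-- A retraction `p` of the vertex set onto a set of *centres* (its fixed points) that sends every
other vertex to a neighbour: a partition of the vertices into stars, one for each centre. -/
structure IsStarRetraction (G : SimpleGraph V) (p : V → V) : Prop where
  idem : ∀ v, p (p v) = p v
  adj : ∀ v, p v ≠ v → G.Adj (p v) v

variable [DecidableEq V]

/-- The coefficient of a link at `v` in the star equation
`IsStarRetraction.sum_starLinks_le`: the equation results from multiplying the eigenvalue equation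
of a centre by `lam` and eliminating its leaves. -/
def linkWeight (p : V → V) (lam : ℝ) (v : V) : ℝ := if p v = v then lam else 1

variable [Fintype V]

/-- The vertices other than `c` in the star with centre `c`. -/
def starLeaves (p : V → V) (c : V) : Finset V := {v | p v = c ∧ v ≠ c}

@[simp]
theorem mem_starLeaves {p : V → V} {c v : V} : v ∈ starLeaves p c ↔ p v = c ∧ v ≠ c := by
  simp [starLeaves]

/-- The amount by which `lam ^ 2` exceeds `#(starLeaves p c)`, the square of the spectral radius of
the star at `c`. -/
def starGap (p : V → V) (lam : ℝ) (c : V) : ℝ := lam ^ 2 - (starLeaves p c).card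

/-- The darts leaving the star with centre `c`. -/
def starLinks (G : SimpleGraph V) [DecidableRel G.Adj] (p : V → V) (c : V) : Finset (V × V) :=
  {e | G.Adj e.1 e.2 ∧ p e.1 = c ∧ p e.2 ≠ c}

@[simp]
theorem mem_starLinks {G : SimpleGraph V} [DecidableRel G.Adj] {p : V → V} {c : V} {e : V × V} :
    e ∈ starLinks G p c ↔ G.Adj e.1 e.2 ∧ p e.1 = c ∧ p e.2 ≠ c := by
  simp [starLinks]

variable {G : SimpleGraph V} {p : V → V} {lam : ℝ} {x : V → ℝ}

theorem sum_starLinks [DecidableRel G.Adj] {c : V} (hc : p c = c) (x : V → ℝ) :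
    ∑ e ∈ starLinks G p c, linkWeight p lam e.1 * x e.2 =
      lam * ∑ w with G.Adj c w ∧ p w ≠ c, x w +
        ∑ v ∈ starLeaves p c, ∑ w with G.Adj v w ∧ p w ≠ c, x w := by
  rw [Finset.sum_finset_product (starLinks G p c) (insert c (starLeaves p c))
    (fun v ↦ {w | G.Adj v w ∧ p w ≠ c}), Finset.sum_insert (by simp)]
  · simp only [linkWeight, hc, if_true, Finset.mul_sum]
    congr 1
    refine Finset.sum_congr rfl fun v hv ↦ Finset.sum_congr rfl fun w _ ↦ ?_
    obtain ⟨rfl, hne⟩ := mem_starLeaves.1 hv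
    rw [if_neg hne.symm, one_mul]
  · rintro ⟨v, w⟩
    by_cases hv : v = c
    · simp [hv, hc]
    · simp only [mem_starLinks, Finset.mem_insert, mem_starLeaves, Finset.mem_filter_univ]
      tauto

theorem ne_of_mem_starLeaves {c d v w : V} (hcd : c ≠ d) (hv : v ∈ starLeaves p c)
    (hw : w ∈ starLeaves p d) : v ≠ w := by
  rintro rfl
  exact hcd ((mem_starLeaves.1 hv).1.symm.trans (mem_starLeaves.1 hw).1)

theorem ne_of_mem_starLeaves_of_apply_eq {c d v : V} (hv : v ∈ starLeaves p c) (hd : p d = d) :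
    v ≠ d := by
  rintro rfl
  obtain ⟨hvc, hne⟩ := mem_starLeaves.1 hv
  exact hne (hd.symm.trans hvc)

omit [Fintype V] in
theorem linkWeight_of_eq {c : V} (hc : p c = c) : linkWeight p lam c = lam := if_pos hc

theorem linkWeight_of_mem_starLeaves {c v : V} (hv : v ∈ starLeaves p c) :
    linkWeight p lam v = 1 := by
  obtain ⟨rfl, hne⟩ := mem_starLeaves.1 hv
  exact if_neg hne.symm

omit [Fintype V] in
theorem linkWeight_pos (hlam : 0 < lam) (v : V) : 0 < linkWeight p lam v := by
  unfold linkWeight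
  split_ifs
  exacts [hlam, one_pos]

namespace IsStarRetraction

variable (hp : IsStarRetraction G p)
include hp

theorem apply_of_mem_starLeaves {c v : V} (hv : v ∈ starLeaves p c) : p c = c := by
  obtain ⟨rfl, -⟩ := mem_starLeaves.1 hv
  exact hp.idem v

theorem adj_of_mem_starLeaves {c v : V} (hv : v ∈ starLeaves p c) : G.Adj c v := by
  obtain ⟨rfl, hne⟩ := mem_starLeaves.1 hv
  exact hp.adj v hne.symm

theorem sum_starLeaves_add_le [DecidableRel G.Adj] (hx : IsPosSupersolution G lam x) (c : V) :
    ∑ v ∈ starLeaves p c, x v + ∑ w with G.Adj c w ∧ p w ≠ c, x w ≤ lam * x c := by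
  rw [← Finset.sum_union]
  · refine hx.sum_le fun w hw ↦ ?_
    rcases Finset.mem_union.1 hw with hw | hw
    · exact hp.adj_of_mem_starLeaves hw
    · exact (Finset.mem_filter.1 hw).2.1
  · exact Finset.disjoint_left.2 fun w hw hw' ↦
      (Finset.mem_filter.1 hw').2.2 (mem_starLeaves.1 hw).1

theorem add_sum_le [DecidableRel G.Adj] (hx : IsPosSupersolution G lam x) {c v : V}
    (hv : v ∈ starLeaves p c) :
    x c + ∑ w with G.Adj v w ∧ p w ≠ c, x w ≤ lam * x v := by
  rw [← Finset.sum_insert (s := {w | G.Adj v w ∧ p w ≠ c}) (f := x)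
    (by simp [hp.apply_of_mem_starLeaves hv])]
  refine hx.sum_le fun w hw ↦ ?_
  rcases Finset.mem_insert.1 hw with rfl | hw
  · exact (hp.adj_of_mem_starLeaves hv).symm
  · exact (Finset.mem_filter.1 hw).2.1

theorem sum_starLinks_le [DecidableRel G.Adj] (hx : IsPosSupersolution G lam x) (hlam : 0 ≤ lam)
    {c : V} (hc : p c = c) :
    ∑ e ∈ starLinks G p c, linkWeight p lam e.1 * x e.2 ≤ starGap p lam c * x c := by
  have hcentre := mul_le_mul_of_nonneg_left (hp.sum_starLeaves_add_le hx c) hlam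
  have hleaves := Finset.sum_le_sum fun v (hv : v ∈ starLeaves p c) ↦ hp.add_sum_le hx hv
  rw [Finset.sum_add_distrib, Finset.sum_const, nsmul_eq_mul, ← Finset.mul_sum] at hleaves
  rw [sum_starLinks hc, starGap]
  linarith

variable (hx : IsPosSupersolution G lam x) (hlam : 0 < lam)
include hx hlam

theorem le_of_link {c v w : V} (hv : p v = c) (hw : p w ≠ c) (hvw : G.Adj v w) :
    linkWeight p lam v * x w ≤ starGap p lam c * x c := by
  classical
  refine le_trans ?_ (hp.sum_starLinks_le hx hlam.le (hv ▸ hp.idem v))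
  exact Finset.single_le_sum (f := fun e : V × V ↦ linkWeight p lam e.1 * x e.2)
    (fun e _ ↦ mul_nonneg (linkWeight_pos hlam e.1).le (hx.pos e.2).le)
    (mem_starLinks.2 ⟨hvw, hv, hw⟩ : (v, w) ∈ _)

theorem add_le_of_links {c v w v' w' : V} (hv : p v = c) (hw : p w ≠ c) (hvw : G.Adj v w)
    (hv' : p v' = c) (hw' : p w' ≠ c) (hvw' : G.Adj v' w') (hne : (v, w) ≠ (v', w')) :
    linkWeight p lam v * x w + linkWeight p lam v' * x w' ≤ starGap p lam c * x c := by
  classical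
  refine le_trans ?_ (hp.sum_starLinks_le hx hlam.le (hv ▸ hp.idem v))
  exact Finset.add_le_sum (f := fun e : V × V ↦ linkWeight p lam e.1 * x e.2)
    (fun e _ ↦ mul_nonneg (linkWeight_pos hlam e.1).le (hx.pos e.2).le)
    (mem_starLinks.2 ⟨hvw, hv, hw⟩ : (v, w) ∈ _) (mem_starLinks.2 ⟨hvw', hv', hw'⟩) hne

theorem starGap_pos {c v w : V} (hv : p v = c) (hw : p w ≠ c) (hvw : G.Adj v w) :
    0 < starGap p lam c :=
  pos_of_mul_pos_left ((mul_pos (linkWeight_pos hlam v) (hx.pos w)).trans_le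
    (hp.le_of_link hx hlam hv hw hvw)) (hx.pos c).le

theorem sq_le_of_adj_centres {i j : V} (hi : p i = i) (hj : p j = j) (hij : G.Adj i j) :
    lam ^ 2 ≤ starGap p lam i * starGap p lam j := by
  have hlink_i := hp.le_of_link hx hlam hi (hj.trans_ne hij.ne') hij
  have hlink_j := hp.le_of_link hx hlam hj (hi.trans_ne hij.ne) hij.symm
  rw [linkWeight_of_eq hi] at hlink_i
  rw [linkWeight_of_eq hj] at hlink_j
  refine le_of_mul_le_mul_right ?_ (hx.pos i)
  calc lam ^ 2 * x i = lam * (lam * x i) := by ring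
    _ ≤ lam * (starGap p lam j * x j) := by gcongr
    _ = starGap p lam j * (lam * x j) := by ring
    _ ≤ starGap p lam j * (starGap p lam i * x i) := by
      gcongr
      exact (hp.starGap_pos hx hlam hj (hi.trans_ne hij.ne) hij.symm).le
    _ = starGap p lam i * starGap p lam j * x i := by ring

theorem one_lt_of_adj_leaf (hG : G.Preconnected) {i j v y : V} (hi : p i = i) (hij : i ≠ j)
    (hv : v ∈ starLeaves p j) (hiv : G.Adj i v) (hyi : p y ≠ i) (hyj : p y ≠ j) :
    1 < (starGap p lam i - 1) * starGap p lam j := by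
  have hpv := (mem_starLeaves.1 hv).1
  have hgj := hp.starGap_pos hx hlam hpv (hi.trans_ne hij) hiv.symm
  have hlink_i := hp.le_of_link hx hlam hi (hpv.trans_ne hij.symm) hiv
  have hlink_j := hp.le_of_link hx hlam hpv (hi.trans_ne hij) hiv.symm
  have hleaf := hx.add_le (hp.adj_of_mem_starLeaves hv).symm hiv.symm hij.symm
  rw [linkWeight_of_eq hi] at hlink_i
  rw [linkWeight_of_mem_starLeaves hv, one_mul] at hlink_j
  obtain ⟨z, hz, z', hz', hzz'⟩ := exists_adj_of_mem_of_notMem hG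
    (S := {z | p z = i ∨ p z = j}) (.inl hi) (by simp [hyi, hyj] : y ∉ _)
  have hz'i : p z' ≠ i := fun h ↦ hz' (.inl h)
  have hz'j : p z' ≠ j := fun h ↦ hz' (.inr h)
  have hpos := mul_pos (linkWeight_pos (p := p) hlam z) (hx.pos z')
  refine lt_of_mul_lt_mul_right ?_ (hx.pos i).le
  rcases hz with hz | hz
  · have hlinks := hp.add_le_of_links hx hlam hi (hpv.trans_ne hij.symm) hiv hz hz'i hzz'
      (by rintro h; cases h; exact hz'j hpv)
    rw [linkWeight_of_eq hi] at hlinks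
    calc 1 * x i ≤ starGap p lam j * x j := by rwa [one_mul]
      _ < starGap p lam j * ((starGap p lam i - 1) * x i) := by gcongr; linarith
      _ = (starGap p lam i - 1) * starGap p lam j * x i := by ring
  · have hlinks := hp.add_le_of_links hx hlam hpv (hi.trans_ne hij) hiv.symm hz hz'j hzz'
      (by rintro h; cases h; exact hz'i hi)
    rw [linkWeight_of_mem_starLeaves hv, one_mul] at hlinks
    calc 1 * x i < starGap p lam j * x j := by linarith
      _ ≤ starGap p lam j * ((starGap p lam i - 1) * x i) := by gcongr; linarith
      _ = (starGap p lam i - 1) * starGap p lam j * x i := by ring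

theorem one_div_add_one_mul_le {i j u v : V} (hij : i ≠ j) (hu : u ∈ starLeaves p i)
    (hv : v ∈ starLeaves p j) (huv : G.Adj u v) :
    (1 / starGap p lam i + 1) * x v ≤ lam * x u := by
  have hpu := (mem_starLeaves.1 hu).1
  have hpv := (mem_starLeaves.1 hv).1
  have hgi := hp.starGap_pos hx hlam hpu (hpv.trans_ne hij.symm) huv
  have hxi := hp.le_of_link hx hlam hpu (hpv.trans_ne hij.symm) huv
  rw [linkWeight_of_mem_starLeaves hu, one_mul, ← div_le_iff₀' hgi] at hxi
  have hxu := hx.add_le (hp.adj_of_mem_starLeaves hu).symm huv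
    (ne_of_mem_starLeaves_of_apply_eq hv (hp.apply_of_mem_starLeaves hu)).symm
  linear_combination hxi + hxu

theorem le_of_spider {i j k u v w : V} (hij : i ≠ j) (hjk : j ≠ k) (hik : i ≠ k)
    (hu : u ∈ starLeaves p i) (hv : v ∈ starLeaves p j) (hw : w ∈ starLeaves p k)
    (huv : G.Adj u v) (hvw : G.Adj v w) :
    (1 / starGap p lam i + 1 / starGap p lam k + 2) * (starGap p lam j + 1) ≤
      lam ^ 2 * starGap p lam j := by
  have hpv := (mem_starLeaves.1 hv).1
  have hui := (mem_starLeaves.1 hu).1.trans_ne hij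
  have hwk := (mem_starLeaves.1 hw).1.trans_ne hjk.symm
  have huw := ne_of_mem_starLeaves hik hu hw
  have hgj := hp.starGap_pos hx hlam hpv hui huv.symm
  have hxj := hp.add_le_of_links hx hlam hpv hui huv.symm hpv hwk hvw (by simp [huw])
  rw [linkWeight_of_mem_starLeaves hv, one_mul, one_mul] at hxj
  have hxv : x j + (x u + x w) ≤ lam * x v := by
    have hpj := hp.apply_of_mem_starLeaves hv
    simpa [(ne_of_mem_starLeaves_of_apply_eq hu hpj).symm,
      (ne_of_mem_starLeaves_of_apply_eq hw hpj).symm, huw] using hx.sum_le (v := v) (s := {j, u, w})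
      (by simp [(hp.adj_of_mem_starLeaves hv).symm, huv.symm, hvw])
  have hxuw : (1 / starGap p lam i + 1 / starGap p lam k + 2) * x v ≤ lam * (x u + x w) := by
    linear_combination hp.one_div_add_one_mul_le hx hlam hij hu hv huv +
      hp.one_div_add_one_mul_le hx hlam hjk.symm hw hv hvw.symm
  set g := starGap p lam j
  refine le_of_mul_le_mul_right ?_ (hx.pos v)
  calc (1 / starGap p lam i + 1 / starGap p lam k + 2) * (g + 1) * x v
      = (1 / starGap p lam i + 1 / starGap p lam k + 2) * x v * (g + 1) := by ring
    _ ≤ lam * (x u + x w) * (g + 1) := by gcongr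
    _ = g * (lam * (x u + x w)) + lam * (x u + x w) := by ring
    _ ≤ g * (lam * (x u + x w)) + lam * (g * x j) := by gcongr
    _ = g * (lam * (x j + (x u + x w))) := by ring
    _ ≤ g * (lam * (lam * x v)) := by gcongr
    _ = lam ^ 2 * g * x v := by ring

theorem le_of_adj_leaves {i j u v : V} (hij : i ≠ j) (hu : u ∈ starLeaves p i)
    (hv : v ∈ starLeaves p j) (huv : G.Adj u v) :
    (starGap p lam i + 1) * x j ≤ (starGap p lam i * (lam ^ 2 - 1) - 1) * x u := by
  have hpu := (mem_starLeaves.1 hu).1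
  have hpv := (mem_starLeaves.1 hv).1
  have hgi := hp.starGap_pos hx hlam hpu (hpv.trans_ne hij.symm) huv
  have hxu := hp.one_div_add_one_mul_le hx hlam hij hu hv huv
  have hxv := hx.add_le (hp.adj_of_mem_starLeaves hv).symm huv.symm
    (ne_of_mem_starLeaves_of_apply_eq hu (hp.apply_of_mem_starLeaves hv)).symm
  set g := starGap p lam i
  have hmul : (g + 1) * x v ≤ g * (lam * x u) :=
    calc (g + 1) * x v = g * ((1 / g + 1) * x v) := by field_simp; ring
      _ ≤ g * (lam * x u) := by gcongr
  calc (g + 1) * x j ≤ (g + 1) * (lam * x v - x u) := by gcongr; linarith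
    _ = lam * ((g + 1) * x v) - (g + 1) * x u := by ring
    _ ≤ lam * (g * (lam * x u)) - (g + 1) * x u := by gcongr
    _ = (g * (lam ^ 2 - 1) - 1) * x u := by ring

theorem le_of_path {i j k u v v' w : V} (hij : i ≠ j) (hjk : j ≠ k)
    (hu : u ∈ starLeaves p i) (hv : v ∈ starLeaves p j) (hv' : v' ∈ starLeaves p j)
    (hw : w ∈ starLeaves p k) (hvv' : v ≠ v') (huv : G.Adj u v) (hvw : G.Adj v' w) :
    (starGap p lam i + 1) / (starGap p lam i * (lam ^ 2 - 1) - 1) +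
      (starGap p lam k + 1) / (starGap p lam k * (lam ^ 2 - 1) - 1) ≤ starGap p lam j := by
  have hratio : ∀ {c y z}, c ≠ j → y ∈ starLeaves p c → z ∈ starLeaves p j → G.Adj y z →
      (starGap p lam c + 1) / (starGap p lam c * (lam ^ 2 - 1) - 1) * x j ≤ x y := by
    intro c y z hcj hy hz hyz
    have hle := hp.le_of_adj_leaves hx hlam hcj hy hz hyz
    have hgc := hp.starGap_pos hx hlam (mem_starLeaves.1 hy).1
      ((mem_starLeaves.1 hz).1.trans_ne hcj.symm) hyz
    have hpos := pos_of_mul_pos_left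
      ((mul_pos (add_pos hgc one_pos) (hx.pos j)).trans_le hle) (hx.pos y).le
    rwa [div_mul_eq_mul_div, div_le_iff₀' hpos]
  have hxj := hp.add_le_of_links hx hlam (mem_starLeaves.1 hv).1
    ((mem_starLeaves.1 hu).1.trans_ne hij) huv.symm (mem_starLeaves.1 hv').1
    ((mem_starLeaves.1 hw).1.trans_ne hjk.symm) hvw (by simp [hvv'])
  rw [linkWeight_of_mem_starLeaves hv, linkWeight_of_mem_starLeaves hv', one_mul, one_mul] at hxj
  refine le_of_mul_le_mul_right ?_ (hx.pos j)
  linarith [hratio hij hu hv huv, hratio hjk.symm hw hv' hvw.symm]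

end IsStarRetraction

end StarRetraction

section ExtremalExcess

/-- The number `t` is the square of the spectral radius of `G₂(m - 1, m - 4, m - 1)` for
`m = t - s`: the polynomial equation is solvability of the eigenvalue equation of this tree,
and `s ^ 2 + s ≤ 1` amounts to `4 ≤ m`. -/
structure IsExtremalExcess (t s : ℝ) : Prop where
  pos : 0 < s
  sq_add_le_one : s ^ 2 + s ≤ 1
  mul_eq : s * (s + 2) * t = (1 + s) * (s + 4)

theorem exists_isExtremalExcess {m : ℕ} (hm : 4 ≤ m) : ∃ s : ℝ, IsExtremalExcess (m + s) s := by
  have hm' : (4 : ℝ) ≤ m := by exact_mod_cast hm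
  obtain ⟨s, ⟨hs0, -⟩, hs⟩ := intermediate_value_Icc zero_le_one
    (f := fun s : ℝ ↦ s * (s + 2) * (m + s) - (1 + s) * (s + 4)) (by fun_prop)
    (show (0 : ℝ) ∈ Set.Icc _ _ by constructor <;> linarith)
  have hpos : 0 < s := hs0.lt_of_ne (by rintro rfl; norm_num at hs)
  refine ⟨s, hpos, ?_, by linarith⟩
  have hnonneg : 0 ≤ (m - 4) * (s * (s + 2)) :=
    mul_nonneg (sub_nonneg.2 hm') (by positivity)
  have hfactor : (s ^ 2 + s - 1) * (s + 4) ≤ 0 * (s + 4) := by linear_combination hs + hnonneg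
  linarith [le_of_mul_le_mul_right hfactor (by positivity)]

namespace IsExtremalExcess

variable {t s : ℝ} (h : IsExtremalExcess t s)
include h

theorem lt_one : s < 1 := by nlinarith [h.pos, h.sq_add_le_one]

theorem mul_lt {a b : ℕ} (hab : a + b ≤ 2) : (s + a) * (s + b) < t := by
  have hs := h.pos
  have hab' : (a : ℝ) + b ≤ 2 := by exact_mod_cast hab
  have hamgm : (s + a) * (s + b) ≤ (1 + s) ^ 2 := by
    have hsum : s + a + (s + b) ≤ 2 * (1 + s) := by linarith
    nlinarith [sq_nonneg ((s + a) - (s + b)), pow_le_pow_left₀ (by positivity) hsum 2]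
  have hsq : s * (s + 2) * (1 + s) ^ 2 < s * (s + 2) * t := by
    rw [h.mul_eq]
    have := mul_le_mul_of_nonneg_right h.sq_add_le_one (show 0 ≤ s + 2 by linarith)
    nlinarith
  exact hamgm.trans_lt (lt_of_mul_lt_mul_left hsq (by positivity))

theorem sub_one_mul_le {a b : ℕ} (hab : a + b ≤ 2) : (s + a - 1) * (s + b) ≤ 1 := by
  have hs := h.pos
  have hs1 := h.sq_add_le_one
  have ha : a ≤ 2 := by omega
  have hb : b ≤ 2 := by omega
  interval_cases a <;> interval_cases b <;> first | omega | (norm_num; nlinarith)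

theorem mul_lt_of_add_eq_two {a b c : ℕ} (habc : a + b + c = 2) :
    t * (s + b) < (1 / (s + a) + 1 / (s + c) + 2) * (s + b + 1) := by
  have hs := h.pos
  have hs1 := h.lt_one
  have ht : t = (1 + s) * (s + 4) / (s * (s + 2)) := by
    rw [eq_div_iff (by positivity), ← h.mul_eq]; ring
  have ha : a ≤ 2 := by omega
  have hc : c ≤ 2 := by omega
  obtain rfl : b = 2 - a - c := by omega
  rw [ht]
  interval_cases a <;> interval_cases c <;> first | omega | skip
  all_goals
    norm_num
    field_simp
    nlinarith [pow_pos hs 2, pow_pos hs 3, pow_pos hs 4]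

theorem add_one_div_eq : (s + 1) / (s * (t - 1) - 1) = s / 2 + 1 := by
  have hs := h.pos
  have hden : s * (t - 1) - 1 = 2 * (1 + s) / (s + 2) := by
    rw [eq_div_iff (by positivity)]
    linear_combination h.mul_eq
  rw [hden]
  field_simp
  ring

theorem lt_add_one_div {d : ℕ} (hd : d ≠ 0) :
    s / 2 + 1 - d < (s + d + 1) / ((s + d) * (t - 1) - 1) := by
  have hs := h.pos
  have hs1 := h.lt_one
  have hd1 : (1 : ℝ) ≤ d := by exact_mod_cast Nat.one_le_iff_ne_zero.2 hd
  have ht : s * (s + 2) * (t - 1) = 3 * s + 4 := by linear_combination h.mul_eq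
  have hden : s * (s + 2) * ((s + d) * (t - 1) - 1) = (s + d) * (3 * s + 4) - s * (s + 2) := by
    linear_combination (s + d) * ht
  have hpos : 0 < (s + d) * (t - 1) - 1 := by
    refine pos_of_mul_pos_right (a := s * (s + 2)) ?_ (by positivity)
    nlinarith
  obtain rfl | hd2 : d = 1 ∨ 2 ≤ d := by omega
  · rw [lt_div_iff₀ hpos]
    refine lt_of_mul_lt_mul_left (a := s * (s + 2)) ?_ (by positivity)
    rw [Nat.cast_one] at hden ⊢
    calc s * (s + 2) * ((s / 2 + 1 - 1) * ((s + 1) * (t - 1) - 1))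
        = s / 2 * ((s + 1) * (3 * s + 4) - s * (s + 2)) := by linear_combination s / 2 * hden
      _ < s * (s + 2) * (s + 1 + 1) := by nlinarith [pow_pos hs 2]
  · have hd2' : (2 : ℝ) ≤ d := by exact_mod_cast hd2
    have hneg : s / 2 + 1 - d < 0 := by linarith
    exact hneg.trans (by positivity)

theorem le_add_one_div (d : ℕ) :
    s / 2 + 1 - d ≤ (s + d + 1) / ((s + d) * (t - 1) - 1) := by
  rcases eq_or_ne d 0 with rfl | hd
  · simpa using h.add_one_div_eq.ge
  · exact (h.lt_add_one_div hd).le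

end IsExtremalExcess

end ExtremalExcess

section PathOfStars

variable {V : Type*} {G : SimpleGraph V}

theorem IsDomSet.mono {D E : Finset V} (hD : IsDomSet G D) (h : D ⊆ E) : IsDomSet G E :=
  fun v hv ↦ (hD v fun hvD ↦ hv (h hvD)).imp fun _ hu ↦ ⟨h hu.1, hu.2⟩

theorem IsDomSet.exists_isStarRetraction {D : Finset V} (hD : IsDomSet G D) :
    ∃ p, IsStarRetraction G p ∧ ∀ v, p v = v ↔ v ∈ D := by
  classical
  choose! f hf hadj using hD
  refine ⟨fun v ↦ if v ∈ D then v else f v, ⟨fun v ↦ ?_, fun v hv ↦ ?_⟩, fun v ↦ ?_⟩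
  · by_cases h : v ∈ D <;> simp [h, hf]
  · by_cases h : v ∈ D
    · simp [h] at hv
    · simpa [h] using hadj v h
  · by_cases h : v ∈ D
    · simp [h]
    · simpa [h] using (hadj v h).ne

theorem exists_isDomSet_card_eq [Fintype V] {k : ℕ} (h : domNum G ≤ k) (hk : k ≤ Fintype.card V) :
    ∃ D : Finset V, IsDomSet G D ∧ D.card = k := by
  have hne : {k | ∃ D : Finset V, IsDomSet G D ∧ D.card = k}.Nonempty :=
    ⟨_, Finset.univ, fun v hv ↦ (hv (Finset.mem_univ v)).elim, rfl⟩
  obtain ⟨D, hD, hcard⟩ := Nat.sInf_mem hne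
  obtain ⟨E, hDE, hE⟩ := Finset.exists_superset_card_eq (hcard.trans_le h) hk
  exact ⟨E, hD.mono hDE, hE⟩

variable [DecidableEq V] {p : V → V}

namespace IsStarRetraction

omit [DecidableEq V] in
theorem exists_link (hp : IsStarRetraction G p) (hG : G.Preconnected) {D : Finset V}
    (hD : ∀ v, p v = v ↔ v ∈ D) (hcard : 1 < D.card) {c : V} (hc : c ∈ D) :
    ∃ d ∈ D, d ≠ c ∧ ∃ v w, p v = c ∧ p w = d ∧ G.Adj v w := by
  obtain ⟨y, hy, hyc⟩ := Finset.exists_mem_ne hcard c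
  obtain ⟨v, hv, w, hw, hvw⟩ := exists_adj_of_mem_of_notMem hG (S := {v | p v = c})
    ((hD c).2 hc) (((hD y).2 hy).trans_ne hyc : y ∉ _)
  exact ⟨p w, (hD _).1 (hp.idem w), hw, v, w, hv, rfl, hvw⟩

theorem exists_linked_triple (hp : IsStarRetraction G p) (hG : G.Preconnected) {D : Finset V}
    (hD : ∀ v, p v = v ↔ v ∈ D) (hcard : D.card = 3) :
    ∃ i j k, D = {i, j, k} ∧ i ≠ j ∧ j ≠ k ∧ i ≠ k ∧
      (∃ u v, p u = i ∧ p v = j ∧ G.Adj u v) ∧ ∃ v w, p v = j ∧ p w = k ∧ G.Adj v w := by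
  have hlink {c : V} (hc : c ∈ D) := hp.exists_link hG hD (by omega) hc
  obtain ⟨a, ha⟩ := Finset.card_pos.1 (by omega : 0 < D.card)
  obtain ⟨b, hb, hba, u, v, hu, hv, huv⟩ := hlink ha
  obtain ⟨c, hc, hcab⟩ := Finset.exists_mem_notMem_of_card_lt_card (s := {a, b}) (t := D)
    (Finset.card_le_two.trans_lt (by omega))
  obtain ⟨hca, hcb⟩ : c ≠ a ∧ c ≠ b := by simpa using hcab
  have hDeq : D = {c, a, b} := by
    refine (Finset.eq_of_subset_of_card_le (by simp [Finset.insert_subset_iff, *]) ?_).symm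
    rw [hcard, Finset.card_eq_three.2 ⟨c, a, b, hca, hcb, hba.symm, rfl⟩]
  obtain ⟨d, hd, hdc, w, z, hw, hz, hwz⟩ := hlink hc
  obtain rfl | rfl : d = a ∨ d = b := by simpa [hDeq, hdc] using hd
  · exact ⟨c, d, b, hDeq, hca, hba.symm, hcb, ⟨w, z, hw, hz, hwz⟩, u, v, hu, hv, huv⟩
  · exact ⟨c, d, a, by rw [hDeq, Finset.pair_comm], hcb, hba, hca, ⟨w, z, hw, hz, hwz⟩,
      v, u, hv, hu, huv.symm⟩

variable [Fintype V]

theorem sum_card_starLeaves (hp : IsStarRetraction G p) {D : Finset V}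
    (hD : ∀ v, p v = v ↔ v ∈ D) :
    ∑ c ∈ D, (starLeaves p c).card + D.card = Fintype.card V := by
  have hfiber : ∀ c ∈ D, ({v | p v = c} : Finset V).card = (starLeaves p c).card + 1 := by
    intro c hc
    rw [← Finset.card_insert_of_notMem (a := c) (s := starLeaves p c) (by simp)]
    congr 1
    ext v
    by_cases hv : v = c
    · simp [hv, (hD c).2 hc]
    · simp [hv]
  rw [← Finset.card_univ, Finset.card_eq_sum_card_fiberwise (f := p) (s := Finset.univ) (t := D)
    fun v _ ↦ (hD _).1 (hp.idem v), Finset.sum_congr rfl hfiber, Finset.sum_add_distrib,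
    Finset.card_eq_sum_ones D]

variable {lam s : ℝ} {x : V → ℝ}

theorem mem_starLeaves_of_adj (hp : IsStarRetraction G p) (hx : IsPosSupersolution G lam x)
    (hlam : 0 < lam) (hs : IsExtremalExcess (lam ^ 2) s) (hG : G.Preconnected) {c d v w y : V}
    {a b : ℕ} (ha : starGap p lam c = s + a) (hb : starGap p lam d = s + b) (hab : a + b ≤ 2)
    (hcd : c ≠ d) (hv : p v = c) (hw : p w = d) (hvw : G.Adj v w) (hyc : p y ≠ c)
    (hyd : p y ≠ d) : v ∈ starLeaves p c := by
  refine mem_starLeaves.2 ⟨hv, ?_⟩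
  rintro rfl
  by_cases hwd : w = d
  · subst hwd
    have hle := hp.sq_le_of_adj_centres hx hlam hv hw hvw
    rw [ha, hb] at hle
    exact hle.not_gt (hs.mul_lt hab)
  · have hlt := hp.one_lt_of_adj_leaf hx hlam hG hv hcd (mem_starLeaves.2 ⟨hw, hwd⟩) hvw hyc hyd
    rw [ha, hb] at hlt
    exact hlt.not_ge (hs.sub_one_mul_le hab)

end IsStarRetraction

variable [Fintype V]

/-- The stars with centres `i`, `j`, `k` cover the graph and are joined in this order to a path of
stars, by an edge between leaves `u` and `v` and an edge between leaves `v'` and `w`. -/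
structure IsStarPath (G : SimpleGraph V) (p : V → V) (i u v j v' w k : V) : Prop where
  retraction : IsStarRetraction G p
  apply_eq : ∀ z, p z = i ∨ p z = j ∨ p z = k
  mem_u : u ∈ starLeaves p i
  mem_v : v ∈ starLeaves p j
  mem_v' : v' ∈ starLeaves p j
  mem_w : w ∈ starLeaves p k
  ne : v ≠ v'
  adj_uv : G.Adj u v
  adj_vw : G.Adj v' w

namespace IsStarRetraction

variable {lam s : ℝ} {x : V → ℝ}

theorem ne_of_adj_leaves (hp : IsStarRetraction G p) (hx : IsPosSupersolution G lam x)
    (hlam : 0 < lam) (hs : IsExtremalExcess (lam ^ 2) s) {i j k u v v' w : V} {a b c : ℕ}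
    (ha : starGap p lam i = s + a) (hb : starGap p lam j = s + b) (hc : starGap p lam k = s + c)
    (habc : a + b + c = 2) (hij : i ≠ j) (hjk : j ≠ k) (hik : i ≠ k) (hu : u ∈ starLeaves p i)
    (hv : v ∈ starLeaves p j) (hw : w ∈ starLeaves p k) (huv : G.Adj u v) (hvw : G.Adj v' w) :
    v ≠ v' := by
  rintro rfl
  have hle := hp.le_of_spider hx hlam hij hjk hik hu hv hw huv hvw
  rw [ha, hb, hc] at hle
  exact hle.not_gt (hs.mul_lt_of_add_eq_two habc)

theorem isStarPath (hp : IsStarRetraction G p) (hx : IsPosSupersolution G lam x)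
    (hlam : 0 < lam) (hs : IsExtremalExcess (lam ^ 2) s) (hG : G.Preconnected)
    {i j k u v v' w : V} (hcover : ∀ z, p z = i ∨ p z = j ∨ p z = k) (hij : i ≠ j) (hjk : j ≠ k)
    (hik : i ≠ k) {a b c : ℕ} (ha : starGap p lam i = s + a) (hb : starGap p lam j = s + b)
    (hc : starGap p lam k = s + c) (habc : a + b + c = 2) (hu : p u = i) (hv : p v = j)
    (huv : G.Adj u v) (hv' : p v' = j) (hw : p w = k) (hvw : G.Adj v' w) :
    IsStarPath G p i u v j v' w k := by
  have huL := hp.mem_starLeaves_of_adj hx hlam hs hG ha hb (by omega) hij hu hv huv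
    (hw.trans_ne hik.symm) (hw.trans_ne hjk.symm)
  have hvL := hp.mem_starLeaves_of_adj hx hlam hs hG hb ha (by omega) hij.symm hv hu huv.symm
    (hw.trans_ne hjk.symm) (hw.trans_ne hik.symm)
  have hvL' := hp.mem_starLeaves_of_adj hx hlam hs hG hb hc (by omega) hjk hv' hw hvw
    (hu.trans_ne hij) (hu.trans_ne hik)
  have hwL := hp.mem_starLeaves_of_adj hx hlam hs hG hc hb (by omega) hjk.symm hw hv' hvw.symm
    (hu.trans_ne hik) (hu.trans_ne hij)
  exact ⟨hp, hcover, huL, hvL, hvL', hwL, hp.ne_of_adj_leaves hx hlam hs ha hb hc habc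
    hij hjk hik huL hvL hwL huv hvw, huv, hvw⟩

end IsStarRetraction

/- The sum of the two fractions in `IsStarRetraction.le_of_path` is at least
`s + 2 - a - c = s + b`, with equality only for `a = c = 0`. -/
theorem IsStarPath.eq_zero_and_eq_zero {lam s : ℝ} {x : V → ℝ} {i u v j v' w k : V}
    (hP : IsStarPath G p i u v j v' w k) (hij : i ≠ j) (hjk : j ≠ k)
    (hx : IsPosSupersolution G lam x) (hlam : 0 < lam) (hs : IsExtremalExcess (lam ^ 2) s)
    {a b c : ℕ} (ha : starGap p lam i = s + a) (hb : starGap p lam j = s + b)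
    (hc : starGap p lam k = s + c) (habc : a + b + c = 2) : a = 0 ∧ c = 0 := by
  have hle := hP.retraction.le_of_path hx hlam hij hjk hP.mem_u hP.mem_v hP.mem_v' hP.mem_w
    hP.ne hP.adj_uv hP.adj_vw
  rw [ha, hb, hc] at hle
  have hsum : (a : ℝ) + b + c = 2 := by exact_mod_cast habc
  constructor <;> by_contra hne
  · linarith [hs.lt_add_one_div hne, hs.le_add_one_div c]
  · linarith [hs.lt_add_one_div hne, hs.le_add_one_div a]

end PathOfStars

section ExtremalTree

open Matrix

variable {a b c : ℕ}

theorem adjMat_G2graph_mulVec (y : Fin 7 ⊕ (Fin a ⊕ Fin b ⊕ Fin c) → ℝ) :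
    adjMat (G2graph a b c) *ᵥ y = Sum.elim
      ![y (.inl 1) + ∑ z, y (.inr (.inl z)), y (.inl 0) + y (.inl 2), y (.inl 1) + y (.inl 3),
        y (.inl 2) + y (.inl 4) + ∑ z, y (.inr (.inr (.inl z))), y (.inl 3) + y (.inl 5),
        y (.inl 4) + y (.inl 6), y (.inl 5) + ∑ z, y (.inr (.inr (.inr z)))]
      (Sum.elim (fun _ ↦ y (.inl 0))
        (Sum.elim (fun _ ↦ y (.inl 3)) fun _ ↦ y (.inl 6))) := by
  classical
  funext v
  rw [adjMat_mulVec_apply, Finset.sum_filter, Fintype.sum_sum_type, Fin.sum_univ_seven,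
    Fintype.sum_sum_type, Fintype.sum_sum_type]
  rcases v with v | v | v | v
  · fin_cases v <;> simp [G2graph]
  all_goals simp [G2graph]

/-- A positive eigenvector of `G2graph a b c` for the eigenvalue `lam`, if `lam ^ 2` is
`a + 1 + s`, `b + 4 + s` and `c + 1 + s`, and `IsExtremalExcess (lam ^ 2) s` holds. -/
noncomputable def extremalVector (a b c : ℕ) (lam s : ℝ) : Fin 7 ⊕ (Fin a ⊕ Fin b ⊕ Fin c) → ℝ :=
  Sum.elim ![lam, 1 + s, lam * s, 2 * (1 + s) / (s + 2), lam * s, 1 + s, lam]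
    (Sum.elim (fun _ ↦ 1) (Sum.elim (fun _ ↦ 2 * (1 + s) / (s + 2) / lam) fun _ ↦ 1))

variable {lam s : ℝ}

theorem extremalVector_pos (hlam : 0 < lam) (hs : 0 < s) (v : Fin 7 ⊕ (Fin a ⊕ Fin b ⊕ Fin c)) :
    0 < extremalVector a b c lam s v := by
  unfold extremalVector
  rcases v with v | v | v | v
  · fin_cases v <;> dsimp <;> positivity
  all_goals dsimp; positivity

theorem adjMat_mulVec_extremalVector (hlam : 0 < lam) (hs : IsExtremalExcess (lam ^ 2) s)
    (ha : a + 1 + s = lam ^ 2) (hb : b + 4 + s = lam ^ 2) (hc : c + 1 + s = lam ^ 2) :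
    adjMat (G2graph a b c) *ᵥ extremalVector a b c lam s = lam • extremalVector a b c lam s := by
  have hpos := hs.pos
  have heq := hs.mul_eq
  have hlink : 1 + s + 2 * (1 + s) / (s + 2) = lam * (lam * s) := by
    field_simp
    linear_combination -heq
  have hcentre : lam * s + lam * s + b * (2 * (1 + s) / (s + 2) / lam) =
      lam * (2 * (1 + s) / (s + 2)) := by
    field_simp
    linear_combination 2 * heq + 2 * (1 + s) * hb
  rw [adjMat_G2graph_mulVec]
  funext v
  rcases v with v | v | v | v
  · fin_cases v <;> simp [extremalVector] <;> linarith
  all_goals simp [extremalVector, mul_div_cancel₀, hlam.ne']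

theorem specRad_G2graph_le (hlam : 0 < lam) (hs : IsExtremalExcess (lam ^ 2) s)
    (ha : a + 1 + s = lam ^ 2) (hb : b + 4 + s = lam ^ 2) (hc : c + 1 + s = lam ^ 2) :
    specRad (G2graph a b c) ≤ lam :=
  IsPosSupersolution.specRad_le ⟨extremalVector_pos hlam hs.pos,
    (adjMat_mulVec_extremalVector hlam hs ha hb hc).le⟩ hlam.le

theorem G2graph_le {H : SimpleGraph (Fin 7 ⊕ (Fin a ⊕ Fin b ⊕ Fin c))}
    (h0 : H.Adj (.inl 0) (.inl 1)) (h1 : H.Adj (.inl 1) (.inl 2)) (h2 : H.Adj (.inl 2) (.inl 3))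
    (h3 : H.Adj (.inl 3) (.inl 4)) (h4 : H.Adj (.inl 4) (.inl 5)) (h5 : H.Adj (.inl 5) (.inl 6))
    (ha : ∀ z, H.Adj (.inl 0) (.inr (.inl z))) (hb : ∀ z, H.Adj (.inl 3) (.inr (.inr (.inl z))))
    (hc : ∀ z, H.Adj (.inl 6) (.inr (.inr (.inr z)))) : G2graph a b c ≤ H := by
  intro x y hxy
  wlog h : (x = .inl 0 ∧ y = .inl 1) ∨ (x = .inl 1 ∧ y = .inl 2) ∨ (x = .inl 2 ∧ y = .inl 3) ∨
      (x = .inl 3 ∧ y = .inl 4) ∨ (x = .inl 4 ∧ y = .inl 5) ∨ (x = .inl 5 ∧ y = .inl 6) ∨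
      (∃ z, x = .inl 0 ∧ y = .inr (.inl z)) ∨ (∃ z, x = .inl 3 ∧ y = .inr (.inr (.inl z))) ∨
      (∃ z, x = .inl 6 ∧ y = .inr (.inr (.inr z))) generalizing x y
  · exact (this hxy.symm (hxy.2.resolve_left h)).symm
  rcases h with ⟨rfl, rfl⟩ | ⟨rfl, rfl⟩ | ⟨rfl, rfl⟩ | ⟨rfl, rfl⟩ | ⟨rfl, rfl⟩ | ⟨rfl, rfl⟩ |
    ⟨z, rfl, rfl⟩ | ⟨z, rfl, rfl⟩ | ⟨z, rfl, rfl⟩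
  exacts [h0, h1, h2, h3, h4, h5, ha z, hb z, hc z]

theorem exists_range_eq_coe {V : Type*} {S : Finset V} {n : ℕ} (h : S.card = n) :
    ∃ f : Fin n → V, Set.range f = S :=
  ⟨Subtype.val ∘ (S.equivFinOfCardEq h).symm, by simp [Set.range_comp]⟩

variable {V : Type*} [Fintype V] [DecidableEq V] {G : SimpleGraph V} {p : V → V}

theorem IsStarPath.exists_equiv {i u v j v' w k : V} (h : IsStarPath G p i u v j v' w k)
    (hi : (starLeaves p i).card = a + 1) (hj : (starLeaves p j).card = b + 2)
    (hk : (starLeaves p k).card = c + 1) (hV : Fintype.card V = a + b + c + 7) :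
    ∃ e : Fin 7 ⊕ (Fin a ⊕ Fin b ⊕ Fin c) ≃ V, G2graph a b c ≤ G.comap e := by
  obtain ⟨fa, hfa⟩ := exists_range_eq_coe (S := (starLeaves p i).erase u) (n := a)
    (by rw [Finset.card_erase_of_mem h.mem_u, hi, Nat.add_sub_cancel])
  obtain ⟨fb, hfb⟩ := exists_range_eq_coe (S := ((starLeaves p j).erase v).erase v') (n := b) (by
    rw [Finset.card_erase_of_mem (Finset.mem_erase.2 ⟨h.ne.symm, h.mem_v'⟩),
      Finset.card_erase_of_mem h.mem_v, hj]
    rfl)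
  obtain ⟨fc, hfc⟩ := exists_range_eq_coe (S := (starLeaves p k).erase w) (n := c)
    (by rw [Finset.card_erase_of_mem h.mem_w, hk, Nat.add_sub_cancel])
  let φ : Fin 7 ⊕ (Fin a ⊕ Fin b ⊕ Fin c) → V :=
    Sum.elim ![i, u, v, j, v', w, k] (Sum.elim fa (Sum.elim fb fc))
  have hsurj : Function.Surjective φ := by
    intro z
    rw [← Set.mem_range, Set.Sum.elim_range, Set.Sum.elim_range, Set.Sum.elim_range, hfa, hfb, hfc]
    have := h.apply_eq z
    simp only [Matrix.range_cons, Matrix.range_empty, Set.union_empty, Set.union_singleton,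
      Set.union_insert, Finset.coe_erase, Set.mem_union, Set.mem_insert_iff,
      Set.mem_singleton_iff, Set.mem_sdiff, SetLike.mem_coe, mem_starLeaves, ne_eq]
    tauto
  have hbij : Function.Bijective φ := by
    refine (Fintype.bijective_iff_surjective_and_card φ).2 ⟨hsurj, ?_⟩
    simp only [Fintype.card_sum, Fintype.card_fin]
    omega
  have adj {d z : V} (hz : z ∈ starLeaves p d) := h.retraction.adj_of_mem_starLeaves hz
  refine ⟨.ofBijective φ hbij, G2graph_le (adj h.mem_u) h.adj_uv (adj h.mem_v).symm (adj h.mem_v')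
    h.adj_vw (adj h.mem_w).symm (fun z ↦ adj ?_) (fun z ↦ adj ?_) (fun z ↦ adj ?_)⟩
  · exact Finset.mem_of_mem_erase (hfa.subset (Set.mem_range_self z))
  · exact Finset.mem_of_mem_erase (Finset.mem_of_mem_erase (hfb.subset (Set.mem_range_self z)))
  · exact Finset.mem_of_mem_erase (hfc.subset (Set.mem_range_self z))

end ExtremalTree

section Extremality

variable {V : Type*} [Fintype V] [DecidableEq V] {G : SimpleGraph V} {p : V → V} {lam s : ℝ}
  {m : ℕ}

theorem IsStarRetraction.exists_starGap_eq {x : V → ℝ} (hp : IsStarRetraction G p)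
    (hx : IsPosSupersolution G lam x) (hlam : 0 < lam) (hs : s < 1) (hms : m + s = lam ^ 2)
    {c v w : V} (hv : p v = c) (hw : p w ≠ c) (hvw : G.Adj v w) :
    ∃ a : ℕ, (starLeaves p c).card + a = m ∧ starGap p lam c = s + a := by
  have hpos := hp.starGap_pos hx hlam hv hw hvw
  rw [starGap, ← hms] at hpos
  have hlt : ((starLeaves p c).card : ℝ) < m + 1 := by linarith
  obtain ⟨a, ha⟩ := Nat.exists_eq_add_of_le (Nat.lt_succ_iff.1 (by exact_mod_cast hlt))
  refine ⟨a, ha.symm, ?_⟩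
  rw [starGap, ← hms, ha]
  push_cast
  ring

theorem exists_isStarPath_card_eq (hconn : G.Connected) (hdom : domNum G ≤ 3)
    (hV : Fintype.card V = 3 * m + 1) (hm : m ≠ 0) (hlam : 0 < lam)
    (hs : IsExtremalExcess (lam ^ 2) s) (hms : m + s = lam ^ 2) (hG : specRad G ≤ lam) :
    ∃ p i u v j v' w k, IsStarPath G p i u v j v' w k ∧ (starLeaves p i).card = m ∧
      (starLeaves p j).card + 2 = m ∧ (starLeaves p k).card = m := by
  obtain ⟨D, hD, hcard⟩ := exists_isDomSet_card_eq hdom (by omega)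
  obtain ⟨p, hp, hpD⟩ := hD.exists_isStarRetraction
  obtain ⟨i, j, k, rfl, hij, hjk, hik, ⟨u, v, hu, hv, huv⟩, v', w, hv', hw, hvw⟩ :=
    hp.exists_linked_triple hconn.preconnected hpD hcard
  obtain ⟨x, hx⟩ := exists_isPosSupersolution hconn hG
  obtain ⟨a, hai, ha⟩ := hp.exists_starGap_eq hx hlam hs.lt_one hms hu (hv.trans_ne hij.symm) huv
  obtain ⟨b, hbj, hb⟩ := hp.exists_starGap_eq hx hlam hs.lt_one hms hv (hu.trans_ne hij) huv.symm
  obtain ⟨c, hck, hc⟩ :=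
    hp.exists_starGap_eq hx hlam hs.lt_one hms hw (hv'.trans_ne hjk) hvw.symm
  have habc : a + b + c = 2 := by
    have hsum := hp.sum_card_starLeaves hpD
    rw [hcard, Finset.sum_insert (by simp [hij, hik]), Finset.sum_pair hjk] at hsum
    omega
  have hP := hp.isStarPath hx hlam hs hconn.preconnected
    (fun z ↦ by simpa using (hpD _).1 (hp.idem z)) hij hjk hik ha hb hc habc hu hv huv hv' hw hvw
  obtain ⟨rfl, rfl⟩ := hP.eq_zero_and_eq_zero hij hjk hx hlam hs ha hb hc habc
  exact ⟨p, i, u, v, j, v', w, k, hP, by omega, by omega, by omega⟩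

theorem nonempty_iso_G2graph_of_specRad_le (hm : 4 ≤ m) (hV : Fintype.card V = 3 * m + 1)
    (hconn : G.Connected) (hdom : domNum G ≤ 3) (hlam : 0 < lam)
    (hs : IsExtremalExcess (lam ^ 2) s) (hms : m + s = lam ^ 2) (hG : specRad G ≤ lam) :
    Nonempty (G ≃g G2graph (m - 1) (m - 4) (m - 1)) := by
  obtain ⟨p, i, u, v, j, v', w, k, hP, hi, hj, hk⟩ :=
    exists_isStarPath_card_eq hconn hdom hV (by omega) hlam hs hms hG
  obtain ⟨m, rfl⟩ := Nat.exists_eq_add_of_le' hm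
  obtain ⟨e, he⟩ := hP.exists_equiv (a := m + 3) (b := m) (c := m + 3) hi (by omega) hk
    (by omega)
  have heq : G2graph (m + 3) m (m + 3) = G.comap e :=
    eq_of_le_of_specRad_le he (extremalVector_pos hlam hs.pos)
      (adjMat_mulVec_extremalVector hlam hs (by push_cast at hms ⊢; linarith)
        (by push_cast at hms ⊢; linarith) (by push_cast at hms ⊢; linarith))
      ((specRad_eq_of_iso (SimpleGraph.Iso.comap e G)).trans_le hG)
  change Nonempty (G ≃g G2graph (m + 3) m (m + 3))
  rw [heq]
  exact ⟨(SimpleGraph.Iso.comap e G).symm⟩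

theorem domNum_three_min_specRad_n_eq_3m_add_one_general {V : Type*} [Fintype V] [DecidableEq V]
    (m : ℕ) (hm : 4 ≤ m) (G : SimpleGraph V) (hV : Fintype.card V = 3 * m + 1)
    (hconn : G.Connected) (hdom : domNum G ≤ 3) :
    specRad (G2graph (m - 1) (m - 4) (m - 1)) ≤ specRad G ∧
    (specRad G = specRad (G2graph (m - 1) (m - 4) (m - 1)) ↔
      Nonempty (G ≃g G2graph (m - 1) (m - 4) (m - 1))) := by
  obtain ⟨s, hs⟩ := exists_isExtremalExcess hm
  have hpos : (0 : ℝ) < m + s := add_pos_of_nonneg_of_pos m.cast_nonneg hs.pos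
  have hsq := Real.sq_sqrt hpos.le
  have hlam := Real.sqrt_pos.2 hpos
  rw [← hsq] at hs
  have hle : specRad (G2graph (m - 1) (m - 4) (m - 1)) ≤ √(m + s) :=
    specRad_G2graph_le hlam hs (by rw [hsq, Nat.cast_pred (by omega)]; ring)
      (by rw [hsq, Nat.cast_sub hm]; push_cast; ring)
      (by rw [hsq, Nat.cast_pred (by omega)]; ring)
  have hiso := nonempty_iso_G2graph_of_specRad_le hm hV hconn hdom hlam hs hsq.symm
  refine ⟨?_, fun h ↦ hiso (h.trans_le hle), fun ⟨e⟩ ↦ specRad_eq_of_iso e⟩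
  by_contra! hlt
  obtain ⟨e⟩ := hiso (hlt.le.trans hle)
  exact hlt.ne (specRad_eq_of_iso e)

end Extremality

theorem domNum_three_min_specRad_n_eq_3m_add_one (m : ℕ) (hm : 4 ≤ m)
    (G : SimpleGraph (Fin (3 * m + 1))) (hconn : G.Connected) (hdom : domNum G = 3) :
    specRad (G2graph (m - 1) (m - 4) (m - 1)) ≤ specRad G ∧
    (specRad G = specRad (G2graph (m - 1) (m - 4) (m - 1)) ↔
      Nonempty (G ≃g G2graph (m - 1) (m - 4) (m - 1))) :=
  domNum_three_min_specRad_n_eq_3m_add_one_general m hm G (Fintype.card_fin _) hconn hdom.le
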